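/- Let s_1, …, s_{N+1} be exchangeable real-valued random variables such that, almost surely, all N+1 values are pairwise distinct. Let α ∈ (0,1) satisfy α ≥ 1/(N+1), set k = ⌈(1−α)(N+1)⌉, and let Q_{1−α}({s_i}_{i=1}^N) denote the k-th smallest value among s_1, …, s_N. Then Pr( s_{N+1} ≤ Q_{1−α}({s_i}_{i=1}^N) ) = k/(N+1) = ⌈(1−α)(N+1)⌉/(N+1). -/

import Mathlib

open MeasureTheory
open scoped ENNReal

/-- The `k`-th smallest value (counting multiplicities) of a list of reals:
the `k`-th entry of the list sorted in nondecreasing order. -/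
noncomputable def kthSmallest (l : List ℝ) (k : ℕ) : ℝ :=
  (l.mergeSort (fun a b => @decide (a ≤ b) (Classical.propDecidable _))).getD (k - 1) 0

/-- Real-valued random variables `s 0, …, s (n-1)` are exchangeable if the joint
distribution of any permutation of them equals the original joint distribution. -/
def Exchangeable {Ω : Type*} [MeasurableSpace Ω] (P : Measure Ω) {n : ℕ}
    (s : Fin n → Ω → ℝ) : Prop :=
  ∀ π : Equiv.Perm (Fin n),
    Measure.map (fun ω i => s (π i) ω) P = Measure.map (fun ω i => s i ω) P

/-!
The event `s (N+1) ≤ Q` says that fewer than `k` of the other values lie strictly below `s (N+1)`,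
i.e. that the last coordinate has (zero-based) rank below `k`. Exchangeability makes all `N + 1`
coordinates equally likely to have rank below `k`; when the values are distinct the ranks are a
permutation of `0, …, N`, so exactly `k` coordinates do, and the `N + 1` equal probabilities sum to
`k`.
-/

open Function
open scoped Finset

theorem le_getElem_iff_countP_lt_le {R : Type*} [LinearOrder R] {l : List R} (hl : l.SortedLE)
    (t : R) {m : ℕ} (hm : m < l.length) : t ≤ l[m] ↔ l.countP (· < t) ≤ m := by
  constructor
  · intro ht
    have hdrop : (l.drop m).countP (· < t) = 0 := by
      rw [List.countP_eq_zero]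
      intro a ha
      obtain ⟨i, hi, rfl⟩ := List.mem_drop_iff_getElem.1 ha
      simpa using ht.trans (hl.getElem_le_getElem_of_le (Nat.le_add_right m i))
    calc l.countP (· < t) = (l.take m).countP (· < t) + (l.drop m).countP (· < t) := by
          rw [← List.countP_append, List.take_append_drop]
      _ ≤ m := by grw [hdrop, List.countP_le_length, List.length_take_le, add_zero]
  · intro hcount
    by_contra! ht
    have htake : (l.take (m + 1)).countP (· < t) = (l.take (m + 1)).length := by
      rw [List.countP_eq_length]
      intro a ha
      obtain ⟨i, hi, rfl⟩ := List.mem_take_iff_getElem.1 ha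
      simpa using (hl.getElem_le_getElem_of_le (by omega)).trans_lt ht
    have hle := (List.take_sublist (m + 1) l).countP_le (p := (· < t))
    rw [htake, List.length_take_of_le hm] at hle
    omega

theorem le_kthSmallest_iff {l : List ℝ} {k : ℕ} (hk : 1 ≤ k) (hkl : k ≤ l.length) (t : ℝ) :
    t ≤ kthSmallest l k ↔ l.countP (· < t) < k := by
  have hlt : k - 1 < (l.mergeSort (· ≤ ·)).length := by
    rw [List.length_mergeSort]
    omega
  have hkth : kthSmallest l k = (l.mergeSort (· ≤ ·))[k - 1] := by
    rw [← List.getD_eq_getElem _ 0 hlt, kthSmallest]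
  rw [hkth, le_getElem_iff_countP_lt_le List.sortedLE_mergeSort,
    (List.mergeSort_perm _ _).countP_eq]
  omega

section Rank

variable {ι R : Type*} [Fintype ι] [LinearOrder R]

/-- The zero-based rank of the coordinate `x j` among all coordinates of `x`, counting only strictly
smaller coordinates, so that tied coordinates share the same rank. -/
def coordRank (x : ι → R) (j : ι) : ℕ := #{i | x i < x j}

theorem coordRank_lt_coordRank {x : ι → R} {i j : ι} (h : x i < x j) :
    coordRank x i < coordRank x j := by
  refine Finset.card_lt_card (Finset.ssubset_iff_of_subset ?_ |>.2 ⟨i, by simpa, by simp⟩)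
  exact Finset.monotone_filter_right _ fun _ _ hi => hi.trans h

theorem coordRank_lt_card (x : ι → R) (j : ι) : coordRank x j < Fintype.card ι :=
  Finset.card_lt_univ_of_notMem (x := j) (by simp)

theorem coordRank_injective {x : ι → R} (hx : Injective x) : Injective (coordRank x) := by
  intro i j hij
  by_contra hne
  rcases (hx.ne hne).lt_or_gt with h | h
  · exact (coordRank_lt_coordRank h).ne hij
  · exact (coordRank_lt_coordRank h).ne' hij

theorem image_coordRank {x : ι → R} (hx : Injective x) :
    Finset.univ.image (coordRank x) = Finset.range (Fintype.card ι) := by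
  refine Finset.eq_of_subset_of_card_le ?_ ?_
  · simp [Finset.image_subset_iff, coordRank_lt_card]
  · rw [Finset.card_image_of_injective _ (coordRank_injective hx), Finset.card_range,
      Finset.card_univ]

theorem card_coordRank_lt {x : ι → R} (hx : Injective x) {k : ℕ} (hk : k ≤ Fintype.card ι) :
    #{j | coordRank x j < k} = k := by
  calc #{j | coordRank x j < k}
      = #((Finset.univ.image (coordRank x)).filter (· < k)) := by
        rw [Finset.filter_image, Finset.card_image_of_injective _ (coordRank_injective hx)]
    _ = #(Finset.range k) := by
        rw [image_coordRank hx]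
        congr 1
        ext m
        simp only [Finset.mem_filter, Finset.mem_range]
        omega
    _ = k := Finset.card_range k

theorem coordRank_comp_perm (x : ι → R) (π : Equiv.Perm ι) (j : ι) :
    coordRank (x ∘ π) j = coordRank x (π j) :=
  Finset.card_equiv π (by simp)

theorem countP_ofFn_lt_last {N : ℕ} (x : Fin (N + 1) → R) :
    (List.ofFn fun i : Fin N => x i.castSucc).countP (· < x (Fin.last N)) =
      coordRank x (Fin.last N) := by
  rw [coordRank, Fin.univ_castSuccEmb, Finset.filter_cons, if_neg (lt_irrefl _),
    Finset.filter_map, Finset.card_map, ← Multiset.coe_countP, ← Fin.univ_val_map,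
    Multiset.countP_map]
  rfl

theorem last_le_kthSmallest_iff {N k : ℕ} (hk : 1 ≤ k) (hkN : k ≤ N) (x : Fin (N + 1) → ℝ) :
    x (Fin.last N) ≤ kthSmallest (List.ofFn fun i : Fin N => x i.castSucc) k ↔
      coordRank x (Fin.last N) < k := by
  rw [le_kthSmallest_iff hk (by simpa), countP_ofFn_lt_last]

end Rank

theorem sum_measure_eq_lintegral_card {ι Ω : Type*} [Fintype ι] [MeasurableSpace Ω]
    (μ : Measure Ω) {p : ι → Ω → Prop} [∀ i, DecidablePred (p i)]
    (hp : ∀ i, MeasurableSet {ω | p i ω}) :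
    ∑ i, μ {ω | p i ω} = ∫⁻ ω, #{i | p i ω} ∂μ := by
  calc ∑ i, μ {ω | p i ω} = ∑ i, ∫⁻ ω, {ω | p i ω}.indicator 1 ω ∂μ := by
        simp only [lintegral_indicator_one (hp _)]
    _ = ∫⁻ ω, ∑ i, {ω | p i ω}.indicator 1 ω ∂μ :=
        (lintegral_finsetSum _ fun i _ => measurable_one.indicator (hp i)).symm
    _ = ∫⁻ ω, #{i | p i ω} ∂μ := by
        simp only [Set.indicator_apply, Set.mem_ofPred_eq, Pi.one_apply, Finset.sum_boole]

theorem measurableSet_injective {ι R : Type*} [Countable ι] [MeasurableSpace R] [MeasurableEq R] :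
    MeasurableSet {x : ι → R | Injective x} := by
  simp only [Injective, Set.ofPred_forall]
  refine .iInter fun i => .iInter fun j => ?_
  exact .imp (measurableSet_eq_fun (measurable_pi_apply i) (measurable_pi_apply j)) (.const _)

section PermutationInvariant

variable {ι R : Type*} [Fintype ι] [LinearOrder R] [TopologicalSpace R] [OrderClosedTopology R]
  [SecondCountableTopology R] [MeasurableSpace R] [OpensMeasurableSpace R]

theorem measurable_coordRank (j : ι) : Measurable fun x : ι → R => coordRank x j := by
  simp only [coordRank, Finset.card_filter]
  exact Finset.measurable_fun_sum _ fun i _ =>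
    .ite (measurableSet_lt (measurable_pi_apply i) (measurable_pi_apply j))
      measurable_const measurable_const

theorem measurableSet_coordRank_lt (j : ι) (k : ℕ) :
    MeasurableSet {x : ι → R | coordRank x j < k} :=
  measurableSet_lt (measurable_coordRank j) measurable_const

variable {ν : Measure (ι → R)}

theorem sum_measure_coordRank_lt (hinj : ∀ᵐ x ∂ν, Injective x) {k : ℕ}
    (hk : k ≤ Fintype.card ι) : ∑ j, ν {x | coordRank x j < k} = k * ν Set.univ := by
  rw [sum_measure_eq_lintegral_card ν fun j => measurableSet_coordRank_lt j k, ← lintegral_const]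
  refine lintegral_congr_ae ?_
  filter_upwards [hinj] with x hx
  rw [card_coordRank_lt hx hk]

theorem measure_coordRank_lt_congr (hν : ∀ π : Equiv.Perm ι, ν.map (· ∘ π) = ν) (k : ℕ)
    (i j : ι) : ν {x | coordRank x i < k} = ν {x | coordRank x j < k} := by
  classical
  calc ν {x | coordRank x i < k} = ν.map (· ∘ Equiv.swap i j) {x | coordRank x i < k} := by
        rw [hν]
    _ = ν {x | coordRank (x ∘ Equiv.swap i j) i < k} :=
        Measure.map_apply (by fun_prop) (measurableSet_coordRank_lt i k)
    _ = ν {x | coordRank x j < k} := by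
        simp only [coordRank_comp_perm, Equiv.swap_apply_left]

theorem measure_coordRank_lt (hν : ∀ π : Equiv.Perm ι, ν.map (· ∘ π) = ν)
    (hinj : ∀ᵐ x ∂ν, Injective x) {k : ℕ} (hk : k ≤ Fintype.card ι) (j : ι) :
    ν {x | coordRank x j < k} = k / Fintype.card ι * ν Set.univ := by
  have : Nonempty ι := ⟨j⟩
  have hsum : Fintype.card ι * ν {x | coordRank x j < k} = k * ν Set.univ := by
    rw [← sum_measure_coordRank_lt hinj hk,
      Finset.sum_congr rfl fun i _ => measure_coordRank_lt_congr hν k i j,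
      Finset.sum_const, Finset.card_univ, nsmul_eq_mul]
  rw [ENNReal.mul_comm_div, ← mul_div_assoc, ENNReal.eq_div_iff (by simp) (by simp), hsum]

end PermutationInvariant

theorem Exchangeable.map_comp_perm {Ω : Type*} [MeasurableSpace Ω] {P : Measure Ω} {n : ℕ}
    {s : Fin n → Ω → ℝ} (hexch : Exchangeable P s) (hmeas : ∀ i, AEMeasurable (s i) P)
    (π : Equiv.Perm (Fin n)) :
    (P.map fun ω i => s i ω).map (· ∘ π) = P.map fun ω i => s i ω := by
  have hπ : Measurable fun x : Fin n → ℝ => x ∘ π := by fun_prop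
  rw [AEMeasurable.map_map_of_aemeasurable hπ.aemeasurable (aemeasurable_pi_lambda _ hmeas)]
  exact hexch π

theorem ceil_one_sub_mul_mem_Icc {N : ℕ} {α : ℝ} (hα : α < 1) (hαN : 1 / ((N : ℝ) + 1) ≤ α) :
    ⌈(1 - α) * ((N : ℝ) + 1)⌉₊ ∈ Set.Icc 1 N := by
  have hN : (0 : ℝ) < N + 1 := by positivity
  rw [div_le_iff₀ hN] at hαN
  exact ⟨Nat.one_le_ceil_iff.2 (mul_pos (sub_pos.2 hα) hN), Nat.ceil_le.2 (by linarith)⟩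

theorem exact_coverage_general {Ω : Type*} [MeasurableSpace Ω] (P : Measure Ω) (N : ℕ)
    (s : Fin (N + 1) → Ω → ℝ) (hmeas : ∀ i, AEMeasurable (s i) P) (hexch : Exchangeable P s)
    (hdistinct : ∀ᵐ ω ∂P, ∀ i j : Fin (N + 1), i ≠ j → s i ω ≠ s j ω)
    {k : ℕ} (hk : k ∈ Set.Icc 1 N) :
    P {ω | s (Fin.last N) ω ≤ kthSmallest (List.ofFn fun i : Fin N => s i.castSucc ω) k}
      = (k : ℝ≥0∞) / ((N : ℝ≥0∞) + 1) * P Set.univ := by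
  have hX : AEMeasurable (fun ω i => s i ω) P := aemeasurable_pi_lambda _ hmeas
  have hinj : ∀ᵐ x ∂P.map fun ω i => s i ω, Injective x := by
    rw [ae_map_iff hX measurableSet_injective]
    filter_upwards [hdistinct] with ω hω i j hij
    exact not_imp_not.1 (hω i j) hij
  have hkcard : k ≤ Fintype.card (Fin (N + 1)) := by
    rw [Fintype.card_fin]
    exact hk.2.trans N.le_succ
  calc P {ω | s (Fin.last N) ω ≤ kthSmallest (List.ofFn fun i : Fin N => s i.castSucc ω) k}
      = P {ω | coordRank (fun i => s i ω) (Fin.last N) < k} := by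
        simp only [← last_le_kthSmallest_iff hk.1 hk.2]
    _ = P.map (fun ω i => s i ω) {x | coordRank x (Fin.last N) < k} :=
        (Measure.map_apply_of_aemeasurable hX (measurableSet_coordRank_lt _ k)).symm
    _ = k / (N + 1) * P Set.univ := by
        rw [measure_coordRank_lt (hexch.map_comp_perm hmeas) hinj hkcard,
          Measure.map_apply_of_aemeasurable hX .univ, Fintype.card_fin, Nat.cast_succ,
          Set.preimage_univ]

/-- Exact coverage: if `s 1, …, s (N+1)` are exchangeable and almost surely pairwise
distinct, and `α ∈ (0,1)` with `α ≥ 1/(N+1)`, then with `k = ⌈(1-α)(N+1)⌉` and `Q`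
the `k`-th smallest among the first `N` variables,
`Pr(s (N+1) ≤ Q) = k/(N+1)`. -/
theorem exact_coverage
    {Ω : Type*} [MeasurableSpace Ω] (P : Measure Ω) [IsProbabilityMeasure P]
    (N : ℕ) (s : Fin (N + 1) → Ω → ℝ) (hmeas : ∀ i, Measurable (s i))
    (hexch : Exchangeable P s)
    (hdistinct : ∀ᵐ ω ∂P, ∀ i j : Fin (N + 1), i ≠ j → s i ω ≠ s j ω)
    (α : ℝ) (hα0 : 0 < α) (hα1 : α < 1) (hαN : 1 / ((N : ℝ) + 1) ≤ α) :
    P {ω | s (Fin.last N) ω ≤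
        kthSmallest (List.ofFn fun i : Fin N => s i.castSucc ω)
          ⌈(1 - α) * ((N : ℝ) + 1)⌉₊}
      = (⌈(1 - α) * ((N : ℝ) + 1)⌉₊ : ℝ≥0∞) / ((N : ℝ≥0∞) + 1) := by
  simpa using exact_coverage_general P N s (fun i => (hmeas i).aemeasurable) hexch hdistinct
    (ceil_one_sub_mul_mem_Icc hα1 hαN)
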